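/- Let L_R, D_R, U_R, U′_R, D′_R, L′_R be the (n+1)×(n+1) matrices with entries l^R_{ij} = C_{t^{-1}}(n−j,n−i) (−1)^{i−j} t^{−C(i−j,2)} (a₂b₂t^j;t)_{i−j} / (a₁^{-1}a₂t^{−(n−2j−1)};t)_{i−j} (i ≥ j, else 0), d^R_j = (a₁a₂^{-1}t^{−j};t)_{n−j}(a₂b₁;t)_j / ((a₁b₂;t)_{n−j}(a₁^{-1}a₂t^{−(n−j)};t)_j), u^R_{ij} = C_{t^{-1}}(j,i) (a₁b₁t^{n−j};t)_{j−i} / (a₁a₂^{-1}t^{n−i−j};t)_{j−i} (i ≤ j, else 0), u′^R_{ij} = C_t(j,i) (−1)^{j−i} t^{C(j−i,2)} (a₁^{-1}b₁^{-1}t^{−(n−i−1)};t)_{j−i} / (b₁^{-1}b₂t^{i+j−n};t)_{j−i} (i ≤ j, else 0), d′^R_j = (b₁b₂^{-1}t^{n−2j+1};t)_j (a₂^{-1}b₁^{-1}t^{−(n−j−1)};t)_{n−j} / ((a₁^{-1}b₂^{-1}t^{−(j−1)};t)_j (b₁^{-1}b₂t^{−(n−2j−1)};t)_{n−j}), l′^R_{ij}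 = C_t(n−j,n−i) (a₂^{-1}b₂^{-1}t^{−(i−1)};t)_{i−j} / (b₁b₂^{-1}t^{n−2i+1};t)_{i−j} (i ≥ j, else 0). Then L_R D_R U_R = U′_R D′_R L′_R as matrices over the field of rational functions in a₁, a₂, b₁, b₂, t. -/

import Mathlib

open scoped BigOperators

/-- The c-shifted factorial (x;c)_k = (1−x)(1−cx)⋯(1−c^{k−1}x). -/
noncomputable def qPoch (x c : ℂ) (k : ℕ) : ℂ :=
  ∏ i ∈ Finset.range k, (1 - c ^ i * x)

/-- The c-binomial coefficient, zero when k > m. -/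
noncomputable def qBinom (c : ℂ) (m k : ℕ) : ℂ :=
  if k ≤ m then qPoch c c m / (qPoch c c (m - k) * qPoch c c k) else 0

noncomputable def matLR (n : ℕ) (a₁ a₂ b₁ b₂ t : ℂ) :
    Matrix (Fin (n + 1)) (Fin (n + 1)) ℂ :=
  Matrix.of fun i j =>
    if (j : ℕ) ≤ (i : ℕ) then
      qBinom t⁻¹ (n - (j : ℕ)) (n - (i : ℕ)) * (-1 : ℂ) ^ ((i : ℕ) - (j : ℕ)) *
        (t⁻¹) ^ (((i : ℕ) - (j : ℕ)) * (((i : ℕ) - (j : ℕ)) - 1) / 2) *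
        (qPoch (a₂ * b₂ * t ^ (j : ℕ)) t ((i : ℕ) - (j : ℕ)) /
          qPoch (a₁⁻¹ * a₂ * t ^ (-((n : ℤ) - 2 * (j : ℕ) - 1))) t ((i : ℕ) - (j : ℕ)))
    else 0

noncomputable def matDR (n : ℕ) (a₁ a₂ b₁ b₂ t : ℂ) :
    Matrix (Fin (n + 1)) (Fin (n + 1)) ℂ :=
  Matrix.diagonal fun j =>
    qPoch (a₁ * a₂⁻¹ * (t⁻¹) ^ (j : ℕ)) t (n - (j : ℕ)) * qPoch (a₂ * b₁) t (j : ℕ) /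
      (qPoch (a₁ * b₂) t (n - (j : ℕ)) *
        qPoch (a₁⁻¹ * a₂ * t ^ (-((n : ℤ) - (j : ℕ)))) t (j : ℕ))

noncomputable def matUR (n : ℕ) (a₁ a₂ b₁ b₂ t : ℂ) :
    Matrix (Fin (n + 1)) (Fin (n + 1)) ℂ :=
  Matrix.of fun i j =>
    if (i : ℕ) ≤ (j : ℕ) then
      qBinom t⁻¹ (j : ℕ) (i : ℕ) *
        (qPoch (a₁ * b₁ * t ^ (n - (j : ℕ))) t ((j : ℕ) - (i : ℕ)) /
          qPoch (a₁ * a₂⁻¹ * t ^ ((n : ℤ) - (i : ℕ) - (j : ℕ))) t ((j : ℕ) - (i : ℕ)))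
    else 0

noncomputable def matUR' (n : ℕ) (a₁ a₂ b₁ b₂ t : ℂ) :
    Matrix (Fin (n + 1)) (Fin (n + 1)) ℂ :=
  Matrix.of fun i j =>
    if (i : ℕ) ≤ (j : ℕ) then
      qBinom t (j : ℕ) (i : ℕ) * (-1 : ℂ) ^ ((j : ℕ) - (i : ℕ)) *
        t ^ (((j : ℕ) - (i : ℕ)) * (((j : ℕ) - (i : ℕ)) - 1) / 2) *
        (qPoch (a₁⁻¹ * b₁⁻¹ * (t⁻¹) ^ (n - (i : ℕ) - 1)) t ((j : ℕ) - (i : ℕ)) /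
          qPoch (b₁⁻¹ * b₂ * t ^ ((i : ℤ) + (j : ℕ) - n)) t ((j : ℕ) - (i : ℕ)))
    else 0

noncomputable def matDR' (n : ℕ) (a₁ a₂ b₁ b₂ t : ℂ) :
    Matrix (Fin (n + 1)) (Fin (n + 1)) ℂ :=
  Matrix.diagonal fun j =>
    qPoch (b₁ * b₂⁻¹ * t ^ ((n : ℤ) - 2 * (j : ℕ) + 1)) t (j : ℕ) *
        qPoch (a₂⁻¹ * b₁⁻¹ * (t⁻¹) ^ (n - (j : ℕ) - 1)) t (n - (j : ℕ)) /
      (qPoch (a₁⁻¹ * b₂⁻¹ * (t⁻¹) ^ ((j : ℕ) - 1)) t (j : ℕ) *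
        qPoch (b₁⁻¹ * b₂ * t ^ (-((n : ℤ) - 2 * (j : ℕ) - 1))) t (n - (j : ℕ)))

noncomputable def matLR' (n : ℕ) (a₁ a₂ b₁ b₂ t : ℂ) :
    Matrix (Fin (n + 1)) (Fin (n + 1)) ℂ :=
  Matrix.of fun i j =>
    if (j : ℕ) ≤ (i : ℕ) then
      qBinom t (n - (j : ℕ)) (n - (i : ℕ)) *
        (qPoch (a₂⁻¹ * b₂⁻¹ * (t⁻¹) ^ ((i : ℕ) - 1)) t ((i : ℕ) - (j : ℕ)) /
          qPoch (b₁ * b₂⁻¹ * t ^ ((n : ℤ) - 2 * (i : ℕ) + 1)) t ((i : ℕ) - (j : ℕ)))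
    else 0

/-!
Evaluated at a point `x`, the products `(x/a; t)_i (x b tⁱ; t)_{n-i}`, `0 ≤ i ≤ n`, form a row
vector `mixedBasis n a b t x`, and a matrix is determined by its action on these rows for all `x`.
Acting on the row for `(a₁, b₂)`, the matrix `L_R D_R U_R` produces the reversed row for
`(a₂, b₁)`. It does so in two steps: `L_R D_R` replaces the factors involving `b₂` by
`(x/a₂; t)_{n-j}`, which is the Pfaff–Saalschütz sum, and `U_R` then replaces `(x/a₁; t)_j` by
factors involving `b₁`, which is the terminating very-well-poised `₆φ₅` sum. Inverting `t`,
replacing `(a₁, a₂, b₁, b₂)` by `(b₂⁻¹, b₁⁻¹, a₂⁻¹, a₁⁻¹)` and reversing the indices turns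
`L_R, D_R, U_R` into `U′_R, D′_R, L′_R` and preserves the rows up to a shift of `x`, so
`U′_R D′_R L′_R` has the same action.
-/

open Finset.HasAntidiagonal (antidiagonal mem_antidiagonal)

section FiniteOrder

theorem pow_ne_one_of_not_isOfFinOrder {G : Type*} [Monoid G] {c : G} (hc : ¬IsOfFinOrder c)
    {m : ℕ} (hm : m ≠ 0) : c ^ m ≠ 1 :=
  fun h => hc (isOfFinOrder_iff_pow_eq_one.2 ⟨m, Nat.pos_of_ne_zero hm, h⟩)

theorem not_isOfFinOrder_inv {G : Type*} [DivisionMonoid G] {c : G} (hc : ¬IsOfFinOrder c) :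
    ¬IsOfFinOrder c⁻¹ := by
  simpa [isOfFinOrder_iff_pow_eq_one] using hc

end FiniteOrder

section ShiftedFactorial

theorem qPoch_zero (x c : ℂ) : qPoch x c 0 = 1 := by simp [qPoch]

theorem qPoch_succ (x c : ℂ) (k : ℕ) : qPoch x c (k + 1) = qPoch x c k * (1 - c ^ k * x) := by
  simp [qPoch, Finset.prod_range_succ]

theorem qPoch_add (x c : ℂ) (k l : ℕ) :
    qPoch x c (k + l) = qPoch x c k * qPoch (c ^ k * x) c l := by
  simp only [qPoch, Finset.prod_range_add, pow_add, mul_left_comm, mul_assoc]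

theorem qPoch_succ' (x c : ℂ) (k : ℕ) : qPoch x c (k + 1) = (1 - x) * qPoch (c * x) c k := by
  rw [add_comm, qPoch_add]
  simp [qPoch]

theorem qPoch_ne_zero {x c : ℂ} {k : ℕ} (h : ∀ i < k, c ^ i * x ≠ 1) : qPoch x c k ≠ 0 :=
  Finset.prod_ne_zero_iff.2 fun i hi => sub_ne_zero.2 (h i (Finset.mem_range.1 hi)).symm

theorem qPoch_self_ne_zero {c : ℂ} (hc : ¬IsOfFinOrder c) (k : ℕ) : qPoch c c k ≠ 0 :=
  qPoch_ne_zero fun i _ => by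
    rw [← pow_succ]
    exact pow_ne_one_of_not_isOfFinOrder hc i.succ_ne_zero

theorem qPoch_inv_base {c : ℂ} (hc : c ≠ 0) (x : ℂ) (k : ℕ) :
    qPoch x c⁻¹ k = qPoch (x * c ^ (1 - (k : ℤ))) c k := by
  simp only [qPoch]
  rw [← Finset.prod_range_reflect]
  refine Finset.prod_congr rfl fun i hi => ?_
  have hik : ((k - 1 - i : ℕ) : ℤ) = k - 1 - i := by grind
  rw [mul_left_comm, inv_pow, ← zpow_natCast, ← zpow_natCast, ← zpow_neg, ← zpow_add₀ hc, hik,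
    mul_comm x]
  ring_nf

theorem qPoch_mul_zpow_inv_base {c : ℂ} (hc : c ≠ 0) (x : ℂ) {k : ℕ} {l m : ℤ}
    (h : k ≠ 0 → m = l + 1 - k) : qPoch (x * c ^ l) c⁻¹ k = qPoch (x * c ^ m) c k := by
  rcases eq_or_ne k 0 with rfl | hk
  · rw [qPoch_zero, qPoch_zero]
  · rw [qPoch_inv_base hc, mul_assoc, ← zpow_add₀ hc, h hk, add_sub_assoc]

theorem qPoch_eq_mul_qPoch_inv_inv {c x : ℂ} (hc : c ≠ 0) (hx : x ≠ 0) (k : ℕ) :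
    qPoch x c k = (-x) ^ k * c ^ k.choose 2 * qPoch x⁻¹ c⁻¹ k := by
  have hterm : ∀ i ∈ Finset.range k, 1 - c ^ i * x = -x * c ^ i * (1 - c⁻¹ ^ i * x⁻¹) :=
    fun i _ => by
      have := pow_ne_zero i hc
      rw [inv_pow]
      field_simp
      ring
  rw [qPoch, Finset.prod_congr rfl hterm, Finset.prod_mul_distrib, Finset.prod_mul_distrib,
    Finset.prod_const, Finset.card_range, Finset.prod_pow_eq_pow_sum, Finset.sum_range_id,
    ← Nat.choose_two_right, qPoch]

end ShiftedFactorial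

section Binomial

theorem qBinom_add_left (c : ℂ) (m k : ℕ) :
    qBinom c (m + k) m = qPoch c c (m + k) / (qPoch c c m * qPoch c c k) := by
  simp [qBinom, mul_comm]

theorem qBinom_add_right (c : ℂ) (m k : ℕ) : qBinom c (m + k) k = qBinom c (m + k) m := by
  rw [qBinom_add_left, add_comm m k, qBinom_add_left, mul_comm]

theorem qBinom_succ_add_mul {c : ℂ} (hc : ¬IsOfFinOrder c) (m k : ℕ) :
    (1 - c ^ (m + 1)) * qBinom c (m + 1 + k) (m + 1) =
      (1 - c ^ (m + k + 1)) * qBinom c (m + k) m := by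
  have hk := qPoch_self_ne_zero hc k
  have hm := qPoch_self_ne_zero hc (m + 1)
  rw [qPoch_succ, mul_ne_zero_iff] at hm
  obtain ⟨hm, hm'⟩ := hm
  rw [qBinom_add_left, qBinom_add_left, add_right_comm, qPoch_succ, qPoch_succ]
  rw [← pow_succ] at hm' ⊢
  rw [← pow_succ]
  field_simp

theorem qBinom_add_succ_mul {c : ℂ} (hc : ¬IsOfFinOrder c) (m k : ℕ) :
    (1 - c ^ (k + 1)) * qBinom c (m + (k + 1)) m =
      (1 - c ^ (m + k + 1)) * qBinom c (m + k) m := by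
  rw [← qBinom_add_right, ← qBinom_add_right, add_comm m, qBinom_succ_add_mul hc, add_comm k]

theorem add_choose_two (m k : ℕ) : (m + k).choose 2 = m.choose 2 + k.choose 2 + m * k := by
  qify
  simp only [Nat.cast_choose_two, Nat.cast_add]
  ring

theorem qBinom_inv_base {c : ℂ} (hc : c ≠ 0) (m k : ℕ) :
    c ^ (m * k) * qBinom c⁻¹ (m + k) m = qBinom c (m + k) m := by
  rw [qBinom_add_left, qBinom_add_left, qPoch_eq_mul_qPoch_inv_inv hc hc (m + k),
    qPoch_eq_mul_qPoch_inv_inv hc hc m, qPoch_eq_mul_qPoch_inv_inv hc hc k, add_choose_two]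
  have := neg_ne_zero.2 hc
  simp only [pow_add]
  field_simp

end Binomial

section Summation

theorem sum_antidiagonal_succ_add {M : Type*} [AddCommMonoid M] {X Y : ℕ → ℕ → M}
    (hX : ∀ k, X 0 k = 0) (hY : ∀ m, Y m 0 = 0) (N : ℕ) :
    ∑ p ∈ antidiagonal (N + 1), (X p.1 p.2 + Y p.1 p.2) =
      ∑ p ∈ antidiagonal N, (X (p.1 + 1) p.2 + Y p.1 (p.2 + 1)) := by
  rw [Finset.sum_add_distrib, Finset.Nat.sum_antidiagonal_succ, Finset.Nat.sum_antidiagonal_succ',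
    hX, hY, zero_add, zero_add, Finset.sum_add_distrib]

theorem qPoch_mul_one_sub_pow_add (b c : ℂ) (m k : ℕ) :
    (1 - c ^ (m + k)) * qPoch b c m =
      (1 - c ^ m) * (c ^ k - b) * qPoch (c * b) c (m - 1) + (1 - c ^ k) * qPoch (c * b) c m := by
  cases m with
  | zero => simp [qPoch_zero]
  | succ m =>
    rw [qPoch_succ', Nat.add_sub_cancel, qPoch_succ (c * b)]
    ring

/-- The Pfaff–Saalschütz sum. Splitting `1 - c^N` over the summands by `qPoch_mul_one_sub_pow_add`
reduces the sum for `(N, b)` to the one for `(N - 1, c b)`. -/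
theorem sum_qBinom_mul_qPoch {c : ℂ} (hc : ¬IsOfFinOrder c) (a y : ℂ) (N : ℕ) (b : ℂ) :
    ∑ p ∈ antidiagonal N, qBinom c (p.1 + p.2) p.1 * a ^ p.1 * qPoch b c p.1 * qPoch a c p.2 *
        (qPoch y c p.1 * qPoch (a * b * y * c ^ p.1) c p.2) =
      qPoch (a * b) c N * qPoch (a * y) c N := by
  induction N generalizing b with
  | zero => simp [qPoch_zero, qBinom]
  | succ N ih =>
    have hN : 1 - c ^ (N + 1) ≠ 0 :=
      sub_ne_zero.2 (pow_ne_one_of_not_isOfFinOrder hc N.succ_ne_zero).symm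
    refine mul_left_cancel₀ hN ?_
    let Q (m k : ℕ) : ℂ :=
      a ^ m * qPoch a c k * (qPoch y c m * qPoch (a * b * y * c ^ m) c k)
    let X (m k : ℕ) : ℂ :=
      (1 - c ^ m) * qBinom c (m + k) m * ((c ^ k - b) * qPoch (c * b) c (m - 1)) * Q m k
    let Y (m k : ℕ) : ℂ := (1 - c ^ k) * qBinom c (m + k) m * qPoch (c * b) c m * Q m k
    calc (1 - c ^ (N + 1)) * ∑ p ∈ antidiagonal (N + 1), qBinom c (p.1 + p.2) p.1 *
          a ^ p.1 * qPoch b c p.1 * qPoch a c p.2 *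
            (qPoch y c p.1 * qPoch (a * b * y * c ^ p.1) c p.2)
      _ = ∑ p ∈ antidiagonal (N + 1), (X p.1 p.2 + Y p.1 p.2) := by
        rw [Finset.mul_sum]
        refine Finset.sum_congr rfl fun ⟨m, k⟩ hmk => ?_
        rw [← mem_antidiagonal.1 hmk]
        linear_combination qBinom c (m + k) m * Q m k * qPoch_mul_one_sub_pow_add b c m k
      _ = ∑ p ∈ antidiagonal N, (X (p.1 + 1) p.2 + Y p.1 (p.2 + 1)) :=
        sum_antidiagonal_succ_add (by simp [X]) (by simp [Y]) N
      _ = ∑ p ∈ antidiagonal N, (1 - c ^ (N + 1)) * ((1 - a * b) * (1 - c ^ N * (a * y))) *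
          (qBinom c (p.1 + p.2) p.1 * a ^ p.1 * qPoch (c * b) c p.1 * qPoch a c p.2 *
            (qPoch y c p.1 * qPoch (a * (c * b) * y * c ^ p.1) c p.2)) := by
        refine Finset.sum_congr rfl fun ⟨m, k⟩ hmk => ?_
        obtain rfl := mem_antidiagonal.1 hmk
        simp only [X, Y, Q]
        rw [qBinom_add_succ_mul hc, qBinom_succ_add_mul hc, Nat.add_sub_cancel, qPoch_succ y,
          qPoch_succ a, qPoch_succ' (a * b * y * c ^ m)]
        ring_nf
      _ = _ := by
        rw [← Finset.mul_sum, ih, qPoch_succ' (a * b), qPoch_succ (a * y), mul_left_comm a c b]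
        ring

end Summation

section WellPoisedSum

/-- The coefficient of the terminating very-well-poised `₆φ₅` sum, written so that exchanging `m`
with `k` amounts to inverting `ρ`. -/
noncomputable def wellPoisedCoeff (ρ c : ℂ) (m k : ℕ) : ℂ :=
  qBinom c⁻¹ (m + k) m / (qPoch (ρ * c⁻¹ ^ k) c m * qPoch (ρ⁻¹ * c⁻¹ ^ m) c k)

theorem wellPoisedCoeff_inv (ρ c : ℂ) (m k : ℕ) :
    wellPoisedCoeff ρ⁻¹ c k m = wellPoisedCoeff ρ c m k := by
  rw [wellPoisedCoeff, wellPoisedCoeff, add_comm k m, qBinom_add_right, inv_inv,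
    mul_comm (qPoch _ _ k)]

/-- The share of `(1 - c^{-m-k}) wellPoisedCoeff ρ c m k` that is obtained from `(m - 1, k)` in the
contiguous relation for the `₆φ₅` sum; the other share, obtained from `(m, k - 1)`, is
`wellPoisedPart ρ⁻¹ c k m`. -/
noncomputable def wellPoisedPart (ρ c : ℂ) (m k : ℕ) : ℂ :=
  (1 - c⁻¹ ^ m) * (1 - ρ * c ^ m) / (c ^ k - ρ * c ^ m) * wellPoisedCoeff ρ c m k

theorem wellPoisedPart_zero_left (ρ c : ℂ) (k : ℕ) : wellPoisedPart ρ c 0 k = 0 := by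
  simp [wellPoisedPart]

theorem wellPoised_split_add {F : Type*} [Field F] {ρ u v : F} (hρ : ρ ≠ 0)
    (hu : u ≠ 0) (hv : v ≠ 0) (huv : v - ρ * u ≠ 0) :
    (1 - u⁻¹) * (1 - ρ * u) / (v - ρ * u) + (1 - v⁻¹) * (1 - ρ⁻¹ * v) / (u - ρ⁻¹ * v) =
      1 - u⁻¹ * v⁻¹ := by
  have h : u - ρ⁻¹ * v = (v - ρ * u) / -ρ := by field_simp; ring
  rw [h, div_div_eq_mul_div, ← add_div, div_eq_iff huv]
  field_simp
  ring

theorem wellPoisedPart_add_wellPoisedPart_inv {ρ c : ℂ} (hρ0 : ρ ≠ 0) (hc0 : c ≠ 0) {m k : ℕ}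
    (hρ : ρ * c ^ m ≠ c ^ k) :
    wellPoisedPart ρ c m k + wellPoisedPart ρ⁻¹ c k m =
      (1 - c⁻¹ ^ (m + k)) * wellPoisedCoeff ρ c m k := by
  simp only [wellPoisedPart, wellPoisedCoeff_inv, inv_pow, pow_add]
  rw [← add_mul, wellPoised_split_add hρ0 (pow_ne_zero m hc0) (pow_ne_zero k hc0)
    (sub_ne_zero.2 hρ.symm)]

theorem wellPoisedPart_succ {ρ c : ℂ} (hρ0 : ρ ≠ 0) (hc0 : c ≠ 0) (hc : ¬IsOfFinOrder c)
    (hρ : ∀ i j : ℕ, ρ * c ^ i ≠ c ^ j) (m k : ℕ) :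
    wellPoisedPart ρ c (m + 1) k =
      (1 - c⁻¹ ^ (m + k + 1)) * (c ^ k / (c ^ k - ρ * c ^ m)) * wellPoisedCoeff ρ c m k := by
  have h₀ : 1 - ρ * c ^ (m + 1) ≠ 0 := sub_ne_zero.2 (by simpa using (hρ (m + 1) 0).symm)
  have h₁ : c ^ k - ρ * c ^ (m + 1) ≠ 0 := sub_ne_zero.2 (hρ (m + 1) k).symm
  have h₂ : c ^ k - ρ * c ^ m ≠ 0 := sub_ne_zero.2 (hρ m k).symm
  have hleft : qPoch (ρ * c⁻¹ ^ k) c (m + 1) =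
      qPoch (ρ * c⁻¹ ^ k) c m * ((c ^ k - ρ * c ^ m) / c ^ k) := by
    rw [qPoch_succ, inv_pow]
    field_simp
  have hright : qPoch (ρ⁻¹ * c⁻¹ ^ (m + 1)) c k =
      (1 - ρ * c ^ (m + 1)) / (c ^ k - ρ * c ^ (m + 1)) * qPoch (ρ⁻¹ * c⁻¹ ^ m) c k := by
    have h := (qPoch_succ (ρ⁻¹ * c⁻¹ ^ (m + 1)) c k).symm.trans (qPoch_succ' _ c k)
    have hshift : c * (ρ⁻¹ * c⁻¹ ^ (m + 1)) = ρ⁻¹ * c⁻¹ ^ m := by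
      rw [pow_succ]
      field_simp
    rw [hshift] at h
    simp only [inv_pow] at h ⊢
    field_simp at h ⊢
    linear_combination -h
  rw [wellPoisedPart, wellPoisedCoeff, wellPoisedCoeff, hleft, hright]
  have hB := qBinom_succ_add_mul (not_isOfFinOrder_inv hc) m k
  rw [div_mul_eq_mul_div, mul_right_comm, mul_div_assoc', ← mul_assoc, hB]
  field_simp

theorem wellPoised_factor_add {F : Type*} [Field F] {ρ u v : F} (hρ : ρ ≠ 0)
    (huv : v - ρ * u ≠ 0) (g y : F) :
    v / (v - ρ * u) * ((1 - u * (ρ * g)) * (1 - u * (ρ * y))) +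
        u / (u - ρ⁻¹ * v) * ((1 - v * g) * (1 - v * y)) =
      1 - u * v * (ρ * g * y) := by
  have h : u - ρ⁻¹ * v = (v - ρ * u) / -ρ := by field_simp; ring
  rw [h]
  field_simp
  ring

theorem sum_wellPoisedCoeff_mul_qPoch {ρ c : ℂ} (hρ0 : ρ ≠ 0) (hc0 : c ≠ 0) (hc : ¬IsOfFinOrder c)
    (hρ : ∀ i j : ℕ, ρ * c ^ i ≠ c ^ j) (g y : ℂ) (N : ℕ) :
    ∑ p ∈ antidiagonal N, wellPoisedCoeff ρ c p.1 p.2 *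
        (qPoch (ρ * g) c p.1 * qPoch (ρ * y) c p.1 * (qPoch g c p.2 * qPoch y c p.2)) =
      qPoch (ρ * g * y) c N := by
  have hρ' : ∀ i j : ℕ, ρ⁻¹ * c ^ i ≠ c ^ j := fun i j h => hρ j i <| by rw [← h]; field_simp
  induction N with
  | zero => simp [qPoch_zero, qBinom, wellPoisedCoeff]
  | succ N ih =>
    have hN : 1 - c⁻¹ ^ (N + 1) ≠ 0 := sub_ne_zero.2
      (pow_ne_one_of_not_isOfFinOrder (not_isOfFinOrder_inv hc) N.succ_ne_zero).symm
    refine mul_left_cancel₀ hN ?_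
    let T (m k : ℕ) : ℂ := qPoch (ρ * g) c m * qPoch (ρ * y) c m * (qPoch g c k * qPoch y c k)
    have T_add (m k : ℕ) : c ^ k / (c ^ k - ρ * c ^ m) * T (m + 1) k +
        c ^ m / (c ^ m - ρ⁻¹ * c ^ k) * T m (k + 1) = (1 - c ^ (m + k) * (ρ * g * y)) * T m k := by
      simp only [T, qPoch_succ, pow_add]
      rw [← wellPoised_factor_add hρ0 (sub_ne_zero.2 (hρ m k).symm) g y]
      ring
    calc (1 - c⁻¹ ^ (N + 1)) * ∑ p ∈ antidiagonal (N + 1), wellPoisedCoeff ρ c p.1 p.2 * T p.1 p.2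
      _ = ∑ p ∈ antidiagonal (N + 1),
          (wellPoisedPart ρ c p.1 p.2 * T p.1 p.2 + wellPoisedPart ρ⁻¹ c p.2 p.1 * T p.1 p.2) := by
        rw [Finset.mul_sum]
        refine Finset.sum_congr rfl fun ⟨m, k⟩ hmk => ?_
        rw [← add_mul, wellPoisedPart_add_wellPoisedPart_inv hρ0 hc0 (hρ m k),
          mem_antidiagonal.1 hmk, mul_assoc]
      _ = ∑ p ∈ antidiagonal N, (wellPoisedPart ρ c (p.1 + 1) p.2 * T (p.1 + 1) p.2 +
          wellPoisedPart ρ⁻¹ c (p.2 + 1) p.1 * T p.1 (p.2 + 1)) :=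
        sum_antidiagonal_succ_add (X := fun m k => wellPoisedPart ρ c m k * T m k)
          (Y := fun m k => wellPoisedPart ρ⁻¹ c k m * T m k)
          (by simp [wellPoisedPart_zero_left]) (by simp [wellPoisedPart_zero_left]) N
      _ = ∑ p ∈ antidiagonal N, (1 - c⁻¹ ^ (N + 1)) * (1 - c ^ N * (ρ * g * y)) *
          (wellPoisedCoeff ρ c p.1 p.2 * T p.1 p.2) := by
        refine Finset.sum_congr rfl fun ⟨m, k⟩ hmk => ?_
        obtain rfl := mem_antidiagonal.1 hmk
        rw [wellPoisedPart_succ hρ0 hc0 hc hρ,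
          wellPoisedPart_succ (inv_ne_zero hρ0) hc0 hc hρ', wellPoisedCoeff_inv, add_comm k m]
        linear_combination (1 - c⁻¹ ^ (m + k + 1)) * wellPoisedCoeff ρ c m k * T_add m k
      _ = _ := by
        rw [← Finset.mul_sum, ih, qPoch_succ]
        ring

end WellPoisedSum

section IndexSums

variable {M : Type*} [AddCommMonoid M] {j r : ℕ} {F : Fin (j + r + 1) → M} {G : ℕ × ℕ → M}

theorem sum_fin_eq_sum_antidiagonal_of_le (hgt : ∀ i : Fin (j + r + 1), j < i → F i = 0)
    (hle : ∀ m k (h : m + k = j), F ⟨m, by omega⟩ = G (m, k)) :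
    ∑ i, F i = ∑ p ∈ antidiagonal j, G p := by
  let F' (i : ℕ) : M := if h : i < j + r + 1 then F ⟨i, h⟩ else 0
  have hF : ∑ i, F i = ∑ i ∈ Finset.range (j + 1 + r), F' i := by
    rw [add_right_comm j 1 r]
    exact Finset.sum_fin_eq_sum_range F
  rw [hF, Finset.sum_range_add, Finset.Nat.sum_antidiagonal_eq_sum_range_succ_mk]
  refine (congrArg₂ _ (Finset.sum_congr rfl fun m hm => ?_)
    (Finset.sum_eq_zero fun m hm => ?_)).trans (add_zero _)
  · rw [Finset.mem_range] at hm
    simp only [F']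
    rw [dif_pos (by omega), hle m (j - m) (by omega)]
  · rw [Finset.mem_range] at hm
    simp only [F']
    rw [dif_pos (by omega), hgt _ (by simp only; omega)]

theorem sum_fin_eq_sum_antidiagonal_of_ge (hlt : ∀ i : Fin (j + r + 1), i < j → F i = 0)
    (hge : ∀ m k (h : m + k = r), F ⟨j + m, by omega⟩ = G (m, k)) :
    ∑ i, F i = ∑ p ∈ antidiagonal r, G p := by
  let F' (i : ℕ) : M := if h : i < j + r + 1 then F ⟨i, h⟩ else 0
  have hF : ∑ i, F i = ∑ i ∈ Finset.range (j + (r + 1)), F' i := Finset.sum_fin_eq_sum_range F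
  rw [hF, Finset.sum_range_add, Finset.Nat.sum_antidiagonal_eq_sum_range_succ_mk]
  refine (congrArg₂ _ (Finset.sum_eq_zero fun m hm => ?_)
    (Finset.sum_congr rfl fun m hm => ?_)).trans (zero_add _)
  · rw [Finset.mem_range] at hm
    simp only [F']
    rw [dif_pos (by omega), hlt _ hm]
  · rw [Finset.mem_range] at hm
    simp only [F']
    rw [dif_pos (by omega), hge m (r - m) (by omega)]

end IndexSums

section MixedBasis

open scoped Matrix

/-- The basis `(x/a; t)_i (x b tⁱ; t)_{n-i}`, `0 ≤ i ≤ n`, of the polynomials in `x` of degree at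
most `n`, evaluated at `x`. -/
noncomputable def mixedBasis (n : ℕ) (a b t x : ℂ) (i : Fin (n + 1)) : ℂ :=
  qPoch (x / a) t i * qPoch (x * b * t ^ (i : ℕ)) t (n - i)

/-- The products `(x/a₁; t)_j (x/a₂; t)_{n-j}`, the basis through which `L_R D_R U_R` factors,
scaled so that no scalar is left over on either side. -/
noncomputable def splitBasis (n : ℕ) (a₁ a₂ b₁ t x : ℂ) (j : Fin (n + 1)) : ℂ :=
  qPoch (a₂ * b₁) t j / qPoch (a₁⁻¹ * a₂ * t ^ (-((n : ℤ) - (j : ℕ)))) t j *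
    (qPoch (x / a₁) t j * qPoch (x / a₂) t (n - j))

theorem qBinom_inv_mul_qPoch_div {a c : ℂ} (ha : a ≠ 0) (hc : c ≠ 0) {m k : ℕ}
    (h : qPoch (a⁻¹ * c ^ (1 - (m + k : ℤ))) c m ≠ 0) :
    qBinom c⁻¹ (m + k) k * (-1) ^ m * c⁻¹ ^ m.choose 2 * qPoch a c (m + k) /
        qPoch (a⁻¹ * c ^ (1 - (m + k : ℤ))) c m =
      qBinom c (m + k) m * a ^ m * qPoch a c k := by
  have hreverse : qPoch (c ^ k * a) c m =
      (-(c ^ k * a)) ^ m * c ^ m.choose 2 * qPoch (a⁻¹ * c ^ (1 - (m + k : ℤ))) c m := by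
    have hshift : (c ^ k * a)⁻¹ * c ^ (1 - (m : ℤ)) = a⁻¹ * c ^ (1 - (m + k : ℤ)) := by
      rw [← sub_sub, zpow_sub₀ hc _ k, zpow_natCast]
      field_simp
    rw [qPoch_eq_mul_qPoch_inv_inv hc (mul_ne_zero (pow_ne_zero k hc) ha), qPoch_inv_base hc,
      hshift]
  rw [div_eq_iff h, qBinom_add_right, ← qBinom_inv_base hc, add_comm m k, qPoch_add, hreverse,
    neg_pow (c ^ k * a), mul_pow, ← pow_mul, mul_comm k m, inv_pow]
  field_simp
  rw [← pow_mul, mul_comm m 2, pow_mul, neg_one_sq, one_pow]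
  ring

theorem qPoch_mul_zpow_ne_zero {x t : ℂ} (ht : t ≠ 0) (hx : ∀ m : ℤ, t ^ m * x ≠ 1)
    (l : ℤ) (k : ℕ) : qPoch (x * t ^ l) t k ≠ 0 :=
  qPoch_ne_zero fun i _ h => hx (i + l) <| by
    rw [← h, zpow_add₀ ht, zpow_natCast]
    ring

variable {n : ℕ} {a₁ a₂ b₁ b₂ t : ℂ}

theorem matLR_mul_matDR_of_lt {i j : Fin (n + 1)} (hij : i < j) :
    (matLR n a₁ a₂ b₁ b₂ t * matDR n a₁ a₂ b₁ b₂ t) i j = 0 := by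
  rw [matDR, Matrix.mul_diagonal, matLR, Matrix.of_apply, if_neg (by simpa using hij), zero_mul]

theorem matLR_mul_matDR_apply (ha₁ : a₁ ≠ 0) (ha₂ : a₂ ≠ 0) (ht : t ≠ 0)
    (hA : ∀ m : ℤ, t ^ m * (a₁⁻¹ * a₂) ≠ 1) {i j : Fin (n + 1)} {m k : ℕ} (hi : (i : ℕ) = j + m)
    (hn : j + (m + k) = n) :
    (matLR n a₁ a₂ b₁ b₂ t * matDR n a₁ a₂ b₁ b₂ t) i j =
      qPoch (a₂ * b₁) t j / qPoch (a₁⁻¹ * a₂ * t ^ (-((n : ℤ) - (j : ℕ)))) t j /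
          qPoch (a₁ * b₂) t (m + k) *
        (qBinom t (m + k) m * (a₁ * a₂⁻¹ * t⁻¹ ^ (j : ℕ)) ^ m * qPoch (a₂ * b₂ * t ^ (j : ℕ)) t m *
          qPoch (a₁ * a₂⁻¹ * t⁻¹ ^ (j : ℕ)) t k) := by
  have ha : a₁ * a₂⁻¹ * t⁻¹ ^ (j : ℕ) ≠ 0 := by simp [*]
  have hbase : a₁⁻¹ * a₂ * t ^ (-((n : ℤ) - 2 * (j : ℕ) - 1)) =
      (a₁ * a₂⁻¹ * t⁻¹ ^ (j : ℕ))⁻¹ * t ^ (1 - (m + k : ℤ)) := by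
    rw [show -((n : ℤ) - 2 * (j : ℕ) - 1) = j + (1 - (m + k : ℤ)) by omega, zpow_add₀ ht,
      zpow_natCast, mul_inv, mul_inv, inv_inv, inv_pow, inv_inv]
    ring
  have hne := qPoch_mul_zpow_ne_zero ht hA (-((n : ℤ) - 2 * (j : ℕ) - 1)) m
  rw [hbase] at hne
  rw [matDR, Matrix.mul_diagonal, matLR, Matrix.of_apply, if_pos (by omega), hbase,
    show (i : ℕ) - j = m by omega, show n - j = m + k by omega, show n - i = k by omega,
    ← Nat.choose_two_right, mul_right_comm _ _ (qPoch _ t k), ← qBinom_inv_mul_qPoch_div ha ht hne]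
  ring

theorem mixedBasis_vecMul_matLR_mul_matDR (ha₁ : a₁ ≠ 0) (ha₂ : a₂ ≠ 0) (ht : t ≠ 0)
    (ht_order : ¬IsOfFinOrder t) (hA : ∀ m : ℤ, t ^ m * (a₁⁻¹ * a₂) ≠ 1)
    (hB : ∀ m : ℤ, t ^ m * (a₁ * b₂) ≠ 1) (x : ℂ) :
    mixedBasis n a₁ b₂ t x ᵥ* (matLR n a₁ a₂ b₁ b₂ t * matDR n a₁ a₂ b₁ b₂ t) =
      splitBasis n a₁ a₂ b₁ t x := by
  ext ⟨j, hj⟩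
  obtain ⟨N, rfl⟩ := Nat.exists_eq_add_of_le (Nat.lt_succ_iff.1 hj)
  have hBN : qPoch (a₁ * b₂) t N ≠ 0 := by simpa using qPoch_mul_zpow_ne_zero ht hB 0 N
  have hsum := sum_qBinom_mul_qPoch ht_order (a₁ * a₂⁻¹ * t⁻¹ ^ j) (t ^ j * (x / a₁)) N
    (a₂ * b₂ * t ^ j)
  have hab : a₁ * a₂⁻¹ * t⁻¹ ^ j * (a₂ * b₂ * t ^ j) = a₁ * b₂ := by
    rw [inv_pow]
    field_simp
  have hay : a₁ * a₂⁻¹ * t⁻¹ ^ j * (t ^ j * (x / a₁)) = x / a₂ := by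
    rw [inv_pow]
    field_simp
  have haby : a₁ * b₂ * (t ^ j * (x / a₁)) = x * b₂ * t ^ j := by field_simp
  rw [hab, hay, haby] at hsum
  rw [splitBasis, Nat.add_sub_cancel_left, ← mul_div_cancel_left₀ (qPoch (x / a₂) t N) hBN, ← hsum,
    Finset.sum_div, Finset.mul_sum, Finset.mul_sum]
  refine sum_fin_eq_sum_antidiagonal_of_ge (fun i hi => ?_) fun m k hmk => ?_
  · beta_reduce
    rw [matLR_mul_matDR_of_lt hi, mul_zero]
  · obtain rfl := hmk
    beta_reduce
    rw [matLR_mul_matDR_apply (m := m) (k := k) ha₁ ha₂ ht hA rfl rfl, mixedBasis]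
    simp only [qPoch_add (x / a₁), show j + (m + k) - (j + m) = k by omega, pow_add, mul_assoc]
    ring

theorem matUR_of_lt {i j : Fin (n + 1)} (hij : j < i) : matUR n a₁ a₂ b₁ b₂ t i j = 0 := by
  rw [matUR, Matrix.of_apply, if_neg (by simpa using hij)]

theorem splitBasis_mul_matUR_apply (ht : t ≠ 0) (x : ℂ) {i j : Fin (n + 1)} {k M : ℕ}
    (hj : (j : ℕ) = i + k) (hn : j + M = n) :
    splitBasis n a₁ a₂ b₁ t x i * matUR n a₁ a₂ b₁ b₂ t i j =
      qPoch (x / a₂) t M * (wellPoisedCoeff (a₁⁻¹ * a₂ * (t ^ M)⁻¹) t i k *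
        (qPoch (a₂ * b₁) t i * qPoch (x / a₁) t i *
          (qPoch (a₁ * b₁ * t ^ M) t k * qPoch (t ^ M * (x / a₂)) t k))) := by
  have hleft : a₁⁻¹ * a₂ * t ^ (-((n : ℤ) - (i : ℕ))) =
      a₁⁻¹ * a₂ * (t ^ M)⁻¹ * t⁻¹ ^ k := by
    rw [show -((n : ℤ) - (i : ℕ)) = -((M + k : ℕ) : ℤ) by omega, zpow_neg, zpow_natCast, pow_add,
      mul_inv, inv_pow]
    ring
  have hright : a₁ * a₂⁻¹ * t ^ ((n : ℤ) - (i : ℕ) - (j : ℕ)) =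
      (a₁⁻¹ * a₂ * (t ^ M)⁻¹)⁻¹ * t⁻¹ ^ (i : ℕ) := by
    rw [show (n : ℤ) - (i : ℕ) - (j : ℕ) = (M : ℤ) - (i : ℕ) by omega, zpow_sub₀ ht,
      zpow_natCast, zpow_natCast]
    simp only [mul_inv, inv_inv, inv_pow, div_eq_mul_inv, mul_assoc]
  rw [splitBasis, matUR, Matrix.of_apply, if_pos (by omega), hleft, hright,
    show (j : ℕ) - i = k by omega, show n - j = M by omega, show n - i = M + k by omega, hj,
    qPoch_add, wellPoisedCoeff]
  ring

theorem splitBasis_vecMul_matUR (ha₁ : a₁ ≠ 0) (ha₂ : a₂ ≠ 0) (ht : t ≠ 0)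
    (ht_order : ¬IsOfFinOrder t) (hA : ∀ m : ℤ, t ^ m * (a₁⁻¹ * a₂) ≠ 1) (x : ℂ) :
    splitBasis n a₁ a₂ b₁ t x ᵥ* matUR n a₁ a₂ b₁ b₂ t = mixedBasis n a₂ b₁ t x ∘ Fin.rev := by
  ext ⟨j, hj⟩
  obtain ⟨M, rfl⟩ := Nat.exists_eq_add_of_le (Nat.lt_succ_iff.1 hj)
  have hρ (i k : ℕ) : a₁⁻¹ * a₂ * (t ^ M)⁻¹ * t ^ i ≠ t ^ k := fun h => hA (i - M - k) <| by
    rw [zpow_sub₀ ht, zpow_sub₀ ht]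
    simp only [zpow_natCast]
    field_simp at h ⊢
    exact h
  have hsum := sum_wellPoisedCoeff_mul_qPoch (by simp [*]) ht ht_order hρ (a₁ * b₁ * t ^ M)
    (t ^ M * (x / a₂)) j
  have hg : a₁⁻¹ * a₂ * (t ^ M)⁻¹ * (a₁ * b₁ * t ^ M) = a₂ * b₁ := by field_simp
  have hy : a₁⁻¹ * a₂ * (t ^ M)⁻¹ * (t ^ M * (x / a₂)) = x / a₁ := by field_simp
  have hgy : a₂ * b₁ * (t ^ M * (x / a₂)) = x * b₁ * t ^ M := by field_simp
  rw [hg, hy, hgy] at hsum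
  have hrev : ((⟨j, hj⟩ : Fin (j + M + 1)).rev : ℕ) = M := by simp [Fin.rev]
  rw [Function.comp_apply, mixedBasis, hrev, Nat.add_sub_cancel, ← hsum, Finset.mul_sum]
  refine sum_fin_eq_sum_antidiagonal_of_le (fun i hi => ?_) fun m k hmk => ?_
  · beta_reduce
    rw [matUR_of_lt hi, mul_zero]
  · exact splitBasis_mul_matUR_apply ht x hmk.symm rfl

theorem mixedBasis_inv {a b : ℂ} (ht : t ≠ 0) (x : ℂ) :
    mixedBasis n b⁻¹ a⁻¹ t⁻¹ (x * t ^ ((n : ℤ) - 1)) = mixedBasis n a b t x ∘ Fin.rev := by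
  ext i
  obtain ⟨⟨i, hi⟩, rfl⟩ := Fin.rev_involutive.surjective i
  obtain ⟨k, rfl⟩ := Nat.exists_eq_add_of_le (Nat.lt_succ_iff.1 hi)
  have hrev : ((⟨i, hi⟩ : Fin (i + k + 1)).rev : ℕ) = k := by simp [Fin.rev]
  rw [Function.comp_apply, Fin.rev_rev, mixedBasis, mixedBasis, hrev, Nat.add_sub_cancel,
    Nat.add_sub_cancel_left, mul_comm, qPoch_inv_base ht, qPoch_inv_base ht]
  congr 2
  · rw [inv_pow, ← zpow_natCast, ← zpow_neg, mul_right_comm x, mul_assoc, mul_assoc,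
      ← zpow_add₀ ht, ← zpow_add₀ ht, div_eq_mul_inv]
    push_cast
    ring_nf
    simp
  · rw [div_inv_eq_mul, mul_right_comm x, mul_assoc, ← zpow_add₀ ht, ← zpow_natCast]
    push_cast
    ring_nf

theorem mixedBasis_vecMul_matLR_mul_matDR_mul_matUR (ha₁ : a₁ ≠ 0) (ha₂ : a₂ ≠ 0) (ht : t ≠ 0)
    (ht_order : ¬IsOfFinOrder t) (hA : ∀ m : ℤ, t ^ m * (a₁⁻¹ * a₂) ≠ 1)
    (hB : ∀ m : ℤ, t ^ m * (a₁ * b₂) ≠ 1) (x : ℂ) :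
    mixedBasis n a₁ b₂ t x ᵥ*
        (matLR n a₁ a₂ b₁ b₂ t * matDR n a₁ a₂ b₁ b₂ t * matUR n a₁ a₂ b₁ b₂ t) =
      mixedBasis n a₂ b₁ t x ∘ Fin.rev := by
  rw [← Matrix.vecMul_vecMul, mixedBasis_vecMul_matLR_mul_matDR ha₁ ha₂ ht ht_order hA hB,
    splitBasis_vecMul_matUR ha₁ ha₂ ht ht_order hA]

theorem eq_of_vecMul_mixedBasis_eq {a b : ℂ} (ha : a ≠ 0) (ht : t ≠ 0) (ht_order : ¬IsOfFinOrder t)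
    (hab : ∀ m : ℕ, t ^ m * (a * b) ≠ 1) {M M' : Matrix (Fin (n + 1)) (Fin (n + 1)) ℂ}
    (h : ∀ x, mixedBasis n a b t x ᵥ* M = mixedBasis n a b t x ᵥ* M') : M = M' := by
  let V : Matrix (Fin (n + 1)) (Fin (n + 1)) ℂ :=
    Matrix.of fun k => mixedBasis n a b t (a * t⁻¹ ^ (k : ℕ))
  have hV (k i : Fin (n + 1)) : V k i =
      qPoch (t⁻¹ ^ (k : ℕ)) t i * qPoch (t⁻¹ ^ (k : ℕ) * t ^ (i : ℕ) * (a * b)) t (n - i) := by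
    simp only [V, Matrix.of_apply]
    rw [mixedBasis, mul_div_cancel_left₀ _ ha]
    ring_nf
  have hlower : V.IsLowerTriangular := fun k i hki => by
    rw [hV, qPoch, Finset.prod_eq_zero (Finset.mem_range.2 (show (k : ℕ) < i from hki)), zero_mul]
    rw [← mul_pow, mul_inv_cancel₀ ht, one_pow, sub_self]
  have hdet : V.det ≠ 0 := by
    rw [Matrix.det_of_isLowerTriangular _ hlower]
    refine Finset.prod_ne_zero_iff.2 fun i _ => ?_
    rw [hV, ← mul_pow, inv_mul_cancel₀ ht, one_pow, one_mul]
    refine mul_ne_zero (qPoch_ne_zero fun l hl h => ?_) (qPoch_ne_zero fun l _ => hab l)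
    rw [inv_pow, mul_inv_eq_one₀ (pow_ne_zero _ ht)] at h
    refine pow_ne_one_of_not_isOfFinOrder ht_order (Nat.sub_ne_zero_of_lt hl) ?_
    rw [pow_sub₀ _ ht hl.le, h, mul_inv_cancel₀ (pow_ne_zero _ ht)]
  refine ((Matrix.isUnit_iff_isUnit_det _).2 (isUnit_iff_ne_zero.2 hdet)).mul_left_cancel ?_
  refine funext fun k => ?_
  rw [Matrix.mul_apply_eq_vecMul, Matrix.mul_apply_eq_vecMul]
  exact h _

end MixedBasis

section Duality

open scoped Matrix

variable {n : ℕ} {a₁ a₂ b₁ b₂ t : ℂ}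

theorem matUR'_eq_submatrix_matLR (ht : t ≠ 0) :
    matUR' n a₁ a₂ b₁ b₂ t =
      (matLR n b₂⁻¹ b₁⁻¹ a₂⁻¹ a₁⁻¹ t⁻¹).submatrix Fin.revPerm Fin.revPerm := by
  ext i j
  have hi := Fin.val_rev i
  have hj := Fin.val_rev j
  simp only [matUR', matLR, Matrix.submatrix_apply, Matrix.of_apply, Fin.revPerm_apply, inv_inv]
  refine if_ctx_congr (by omega) (fun hle => ?_) fun _ => rfl
  rw [show n - (j.rev : ℕ) = j by omega, show n - (i.rev : ℕ) = i by omega,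
    show (i.rev : ℕ) - j.rev = j - i by omega, mul_comm a₁⁻¹, mul_comm b₁⁻¹ b₂]
  simp only [← zpow_natCast, inv_zpow']
  rw [qPoch_mul_zpow_inv_base ht _ (m := -((n - (i : ℕ) - 1 : ℕ) : ℤ)) (by omega),
    qPoch_mul_zpow_inv_base ht _ (m := (i : ℤ) + (j : ℕ) - n) (by omega)]

theorem matDR'_eq_submatrix_matDR (ht : t ≠ 0) :
    matDR' n a₁ a₂ b₁ b₂ t =
      (matDR n b₂⁻¹ b₁⁻¹ a₂⁻¹ a₁⁻¹ t⁻¹).submatrix Fin.revPerm Fin.revPerm := by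
  rw [matDR', matDR, Matrix.submatrix_diagonal_equiv]
  congr 1
  ext j
  have hj := Fin.val_rev j
  simp only [Function.comp_apply, Fin.revPerm_apply, inv_inv]
  rw [show n - (j.rev : ℕ) = j by omega, show (j.rev : ℕ) = n - j by omega, mul_comm b₁ b₂⁻¹,
    mul_comm a₂⁻¹, mul_comm a₁⁻¹, mul_comm b₁⁻¹ b₂]
  have hpred (x : ℂ) (k : ℕ) : qPoch (x * t⁻¹ ^ (k - 1)) t k = qPoch x t⁻¹ k := by
    rw [← zpow_natCast, inv_zpow', ← qPoch_mul_zpow_inv_base ht x (l := 0) (by omega), zpow_zero,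
      mul_one]
  rw [hpred, hpred]
  simp only [← zpow_natCast, inv_zpow']
  rw [qPoch_mul_zpow_inv_base ht _ (m := (n : ℤ) - 2 * (j : ℕ) + 1) (by omega),
    qPoch_mul_zpow_inv_base ht _ (m := -((n : ℤ) - 2 * (j : ℕ) - 1)) (by omega)]

theorem matLR'_eq_submatrix_matUR (ht : t ≠ 0) :
    matLR' n a₁ a₂ b₁ b₂ t =
      (matUR n b₂⁻¹ b₁⁻¹ a₂⁻¹ a₁⁻¹ t⁻¹).submatrix Fin.revPerm Fin.revPerm := by
  ext i j
  have hi := Fin.val_rev i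
  have hj := Fin.val_rev j
  simp only [matLR', matUR, Matrix.submatrix_apply, Matrix.of_apply, Fin.revPerm_apply, inv_inv]
  refine if_ctx_congr (by omega) (fun hle => ?_) fun _ => rfl
  rw [show (j.rev : ℕ) - i.rev = i - j by omega, show n - (j.rev : ℕ) = j by omega,
    show (i.rev : ℕ) = n - i by omega, show (j.rev : ℕ) = n - j by omega,
    mul_comm a₂⁻¹, mul_comm b₁]
  simp only [← zpow_natCast, inv_zpow']
  rw [qPoch_mul_zpow_inv_base ht _ (m := -(((i : ℕ) - 1 : ℕ) : ℤ)) (by omega),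
    qPoch_mul_zpow_inv_base ht _ (m := (n : ℤ) - 2 * (i : ℕ) + 1) (by omega)]

theorem mixedBasis_vecMul_matUR'_mul_matDR'_mul_matLR' (hb₁ : b₁ ≠ 0) (hb₂ : b₂ ≠ 0)
    (ht : t ≠ 0) (ht_order : ¬IsOfFinOrder t) (hB : ∀ m : ℤ, t ^ m * (a₁ * b₂) ≠ 1)
    (hC : ∀ m : ℤ, t ^ m * (b₁⁻¹ * b₂) ≠ 1) (x : ℂ) :
    mixedBasis n a₁ b₂ t x ᵥ*
        (matUR' n a₁ a₂ b₁ b₂ t * matDR' n a₁ a₂ b₁ b₂ t * matLR' n a₁ a₂ b₁ b₂ t) =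
      mixedBasis n a₂ b₁ t x ∘ Fin.rev := by
  have hB' (m : ℤ) : t⁻¹ ^ m * (b₂⁻¹ * a₁⁻¹) ≠ 1 := by
    rw [inv_zpow, ← mul_inv_rev, ← mul_inv, Ne, inv_eq_one]
    exact hB m
  have hC' (m : ℤ) : t⁻¹ ^ m * (b₂⁻¹⁻¹ * b₁⁻¹) ≠ 1 := by
    rw [inv_zpow', inv_inv, mul_comm b₂]
    exact hC _
  rw [matUR'_eq_submatrix_matLR ht, matDR'_eq_submatrix_matDR ht, matLR'_eq_submatrix_matUR ht,
    Matrix.submatrix_mul_equiv, Matrix.submatrix_mul_equiv, Matrix.submatrix_vecMul_equiv,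
    Fin.revPerm_symm]
  have hrev (v : Fin (n + 1) → ℂ) : v ∘ Fin.revPerm = v ∘ Fin.rev := rfl
  rw [hrev, hrev, ← mixedBasis_inv ht, mixedBasis_vecMul_matLR_mul_matDR_mul_matUR (inv_ne_zero hb₂)
    (inv_ne_zero hb₁) (inv_ne_zero ht) (not_isOfFinOrder_inv ht_order) hC' hB', mixedBasis_inv ht,
    Function.comp_assoc _ Fin.rev, Fin.rev_involutive.comp_self, Function.comp_id]

end Duality

/-- The two Gauss decompositions of the R-matrix agree: L_R D_R U_R = U′_R D′_R L′_R,
for generic parameters. -/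
theorem R_matrix_gauss_decompositions_agree (n : ℕ) (a₁ a₂ b₁ b₂ t : ℂ)
    (ha₁ : a₁ ≠ 0) (ha₂ : a₂ ≠ 0) (hb₁ : b₁ ≠ 0) (hb₂ : b₂ ≠ 0) (ht : t ≠ 0)
    (hroot : ∀ m : ℤ, m ≠ 0 → t ^ m ≠ 1)
    (hA : ∀ m : ℤ, t ^ m * (a₁⁻¹ * a₂) ≠ 1)
    (hB : ∀ m : ℤ, t ^ m * (a₁ * b₂) ≠ 1)
    (hC : ∀ m : ℤ, t ^ m * (b₁⁻¹ * b₂) ≠ 1) :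
    matLR n a₁ a₂ b₁ b₂ t * matDR n a₁ a₂ b₁ b₂ t * matUR n a₁ a₂ b₁ b₂ t =
      matUR' n a₁ a₂ b₁ b₂ t * matDR' n a₁ a₂ b₁ b₂ t * matLR' n a₁ a₂ b₁ b₂ t := by
  have ht_order : ¬IsOfFinOrder t := fun h => by
    obtain ⟨m, hm, htm⟩ := isOfFinOrder_iff_pow_eq_one.1 h
    exact hroot m (by omega) (by rwa [zpow_natCast])
  refine eq_of_vecMul_mixedBasis_eq ha₁ ht ht_order (b := b₂) (fun m => by simpa using hB m)
    fun x => ?_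
  rw [mixedBasis_vecMul_matLR_mul_matDR_mul_matUR ha₁ ha₂ ht ht_order hA hB,
    mixedBasis_vecMul_matUR'_mul_matDR'_mul_matLR' hb₁ hb₂ ht ht_order hB hC]
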